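/- For every n ≥ 1 and every δ > 0 there exist constants C₁, C₂ > 0 depending only on n and δ such that for all weakly decreasing λ, x ∈ ℝⁿ satisfying (λ_i−λ_{i+1})(x_j−x_{j+1}) ≤ δ for all 1 ≤ i, j ≤ n−1 (smallness on all pairs of simple roots), one has C₁·e^{⟨λ,x⟩}·V(λ)·V(x) ≤ ∑_{σ∈Sₙ} sgn(σ)·exp(∑_{k=1}^n λ_{σ(k)} x_k) ≤ C₂·e^{⟨λ,x⟩}·V(λ)·V(x). (Equivalently, the spherical function of type A_{n−1} satisfies ψ_λ(x) ≍ e^{⟨λ,x⟩} in this range, with constants depending only on n and δ.) -/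

import Mathlib

/-!
The alternating sum is the determinant of `exp (ξ i * x j)`. After factoring `exp (ξ 0 * x j)` out
of each column, the first row is constant, so subtracting adjacent columns writes the determinant
as an integral, over the points `t` interlacing with `x`, of a determinant of the same kind in one
dimension less. The determinant of the powers of `-x j`, which is the Vandermonde product, obeys
the same recursion. Comparing the integrands by induction bounds `∏ k < n, k!` times the alternating
sum between `exp (∑ k, ξ k * x (n - 1 - k)) * V ξ * V x` and `exp (∑ k, ξ k * x k) * V ξ * V x`.
Rearranging `x` changes `∑ k, ξ k * x k` by at most `n` times the product of the total drops of `ξ`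
and `x`; this product telescopes into products of simple-root values, so the smallness assumption
makes the two exponentials comparable.
-/

open Finset

/-- The alternating sum `A(ξ,x) = ∑_{σ ∈ Sₙ} sgn(σ) · exp(∑_k ξ_{σ(k)} x_k)`. -/
noncomputable def altSum {n : ℕ} (ξ x : Fin n → ℝ) : ℝ :=
  ∑ σ : Equiv.Perm (Fin n), ((Equiv.Perm.sign σ : ℤ) : ℝ) * Real.exp (∑ k, ξ (σ k) * x k)

/-- The Vandermonde product `V(x) = ∏_{1 ≤ i < j ≤ n} (x_i − x_j)`. -/
def vand {n : ℕ} (x : Fin n → ℝ) : ℝ :=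
  ∏ i : Fin n, ∏ j ∈ Finset.Ioi i, (x i - x j)

section Determinants

open MeasureTheory

theorem integral_det_pi {ι 𝕜 : Type*} [Fintype ι] [DecidableEq ι] [RCLike 𝕜] {Ω : ι → Type*}
    [∀ j, MeasurableSpace (Ω j)] {μ : ∀ j, Measure (Ω j)} [∀ j, SigmaFinite (μ j)]
    {f : ι → ∀ j, Ω j → 𝕜} (hf : ∀ i j, Integrable (f i j) (μ j)) :
    ∫ t, (Matrix.of fun i j => f i j (t j)).det ∂Measure.pi μ =
      (Matrix.of fun i j => ∫ s, f i j s ∂μ j).det := by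
  simp only [Matrix.det_apply', Matrix.of_apply]
  rw [integral_finsetSum _ fun σ _ =>
    (Integrable.fintype_prod_dep fun j => hf (σ j) j).const_mul _]
  refine sum_congr rfl fun σ _ => ?_
  rw [integral_const_mul, integral_fintype_prod_eq_prod fun j => f (σ j) j]

theorem det_eq_det_sub_of_row_zero_eq_one {R : Type*} [CommRing R] {m : ℕ}
    {M : Matrix (Fin (m + 1)) (Fin (m + 1)) R} (hM : ∀ j, M 0 j = 1) :
    M.det = (Matrix.of fun i j : Fin m => M i.succ j.succ - M i.succ j.castSucc).det := by
  let B : Matrix (Fin (m + 1)) (Fin (m + 1)) R :=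
    Matrix.of fun i => Fin.cons (M i 0) fun j => M i j.succ - M i j.castSucc
  have hMB : M.det = B.det :=
    Matrix.det_eq_of_forall_col_eq_smul_add_pred (fun _ => 1) (by simp [B]) (by simp [B])
  rw [hMB, Matrix.det_succ_row_zero, Fin.sum_univ_succ]
  simp [B, hM, Matrix.submatrix]

/-- The box of all `t` interlacing with a weakly decreasing `x`:
`x 0 ≥ t 0 ≥ x 1 ≥ t 1 ≥ ⋯ ≥ t (m - 1) ≥ x m`. It is the domain of integration in the recursions
on the dimension. -/
abbrev interlacingBox {m : ℕ} (x : Fin (m + 1) → ℝ) : Set (Fin m → ℝ) :=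
  Set.Icc (Fin.tail x) (Fin.init x)

theorem antitone_of_mem_interlacingBox {m : ℕ} {x : Fin (m + 1) → ℝ} {t : Fin m → ℝ}
    (hx : Antitone x) (ht : t ∈ interlacingBox x) : Antitone t :=
  antitone_iff_forall_lt.2 fun i j hij =>
    calc
      t j ≤ x j.castSucc := ht.2 j
      _ ≤ x i.succ := hx (Fin.succ_le_castSucc_iff.2 hij)
      _ ≤ t i := ht.1 i

theorem det_eq_integral_interlacingBox {m : ℕ} {f f' : Fin m → ℝ → ℝ}
    (hf : ∀ i s, HasDerivAt (f i) (f' i s) s) (hf' : ∀ i, Continuous (f' i))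
    {x : Fin (m + 1) → ℝ} (hx : Antitone x) {M : Matrix (Fin (m + 1)) (Fin (m + 1)) ℝ}
    (hM_zero : ∀ j, M 0 j = 1) (hM_succ : ∀ i j, M i.succ j = f i (x j)) :
    M.det = ∫ t in interlacingBox x, (Matrix.of fun i j => -f' i (t j)).det := by
  have hintegral (i j : Fin m) : ∫ s in Set.Icc (x j.succ) (x j.castSucc), -f' i s =
      f i (x j.succ) - f i (x j.castSucc) := by
    rw [integral_neg, integral_Icc_eq_integral_Ioc,
      ← intervalIntegral.integral_of_le (hx (Fin.castSucc_le_succ j)),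
      intervalIntegral.integral_eq_sub_of_hasDerivAt (fun s _ => hf i s)
        ((hf' i).intervalIntegrable _ _), neg_sub]
  rw [interlacingBox, ← Set.pi_univ_Icc, volume_pi, Measure.restrict_pi_pi,
    integral_det_pi (f := fun i _ s => -f' i s) fun i _ => (hf' i).neg.integrableOn_Icc,
    det_eq_det_sub_of_row_zero_eq_one hM_zero]
  simp only [Fin.tail, Fin.init, hintegral, hM_succ]

end Determinants

section Vandermonde

theorem vand_eq_det {n : ℕ} (x : Fin n → ℝ) :
    vand x = (Matrix.of fun i j : Fin n => (-x j) ^ (i : ℕ)).det := by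
  have h := Matrix.det_vandermonde fun j => -x j
  simp only [neg_sub_neg] at h
  rw [vand, ← h, ← Matrix.det_transpose]
  rfl

theorem vand_succ {m : ℕ} (x : Fin (m + 1) → ℝ) :
    vand x = (∏ i, (x 0 - Fin.tail x i)) * vand (Fin.tail x) := by
  simp [vand, Fin.tail, Fin.prod_univ_succ, Fin.prod_Ioi_succ]

theorem vand_nonneg {n : ℕ} {x : Fin n → ℝ} (hx : Antitone x) : 0 ≤ vand x :=
  prod_nonneg fun _ _ => prod_nonneg fun _ hj => sub_nonneg.2 (hx (mem_Ioi.1 hj).le)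

@[fun_prop]
theorem continuous_vand {n : ℕ} : Continuous (vand : (Fin n → ℝ) → ℝ) := by
  unfold vand
  fun_prop

theorem vand_eq_factorial_mul_integral {m : ℕ} {x : Fin (m + 1) → ℝ} (hx : Antitone x) :
    vand x = m.factorial * ∫ t in interlacingBox x, vand t := by
  have hderiv (i : Fin m) (s : ℝ) : HasDerivAt (fun s => (-s) ^ ((i : ℕ) + 1))
      (-(((i : ℕ) + 1 : ℝ) * (-s) ^ (i : ℕ))) s := by
    simpa using (hasDerivAt_neg s).fun_pow ((i : ℕ) + 1)
  have hfactorial : (m.factorial : ℝ) = ∏ i : Fin m, ((i : ℕ) + 1 : ℝ) := by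
    rw [Fin.prod_univ_eq_prod_range (fun i : ℕ => (i + 1 : ℝ)), ← prod_range_add_one_eq_factorial]
    push_cast
    rfl
  rw [vand_eq_det, det_eq_integral_interlacingBox hderiv (fun i => by fun_prop) hx (by simp)
    (by simp), hfactorial, ← MeasureTheory.integral_const_mul]
  simp only [neg_neg, vand_eq_det, ← Matrix.det_mul_column, Matrix.of_apply]

theorem mul_vand_mul_vand_eq_integral {m : ℕ} (c : ℝ) (ξ : Fin (m + 1) → ℝ)
    {x : Fin (m + 1) → ℝ} (hx : Antitone x) :
    c * vand ξ * vand x = m.factorial * (∏ i, (ξ 0 - Fin.tail ξ i)) *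
      ∫ t in interlacingBox x, c * vand (Fin.tail ξ) * vand t := by
  rw [vand_succ ξ, vand_eq_factorial_mul_integral hx, MeasureTheory.integral_const_mul]
  ring

end Vandermonde

section AlternatingSum

theorem altSum_eq_det {n : ℕ} (ξ x : Fin n → ℝ) :
    altSum ξ x = (Matrix.of fun i j => Real.exp (ξ i * x j)).det := by
  simp [altSum, Matrix.det_apply', Real.exp_sum]

@[fun_prop]
theorem continuous_altSum {n : ℕ} (ξ : Fin n → ℝ) : Continuous (altSum ξ) := by
  unfold altSum
  fun_prop

theorem altSum_eq_exp_mul_altSum_sub_const {n : ℕ} (ξ x : Fin n → ℝ) (a : ℝ) :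
    altSum ξ x = Real.exp (a * ∑ k, x k) * altSum (fun i => ξ i - a) x := by
  rw [altSum_eq_det, altSum_eq_det, mul_sum, Real.exp_sum, ← Matrix.det_mul_row]
  simp only [Matrix.of_apply, ← Real.exp_add, sub_mul, add_sub_cancel]

theorem altSum_eq_integral {m : ℕ} (ξ : Fin (m + 1) → ℝ) {x : Fin (m + 1) → ℝ}
    (hx : Antitone x) :
    altSum ξ x = (∏ i, (ξ 0 - Fin.tail ξ i)) * ∫ t in interlacingBox x,
      Real.exp (ξ 0 * (∑ k, x k - ∑ k, t k)) * altSum (Fin.tail ξ) t := by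
  have hderiv (i : Fin m) (s : ℝ) : HasDerivAt (fun s => Real.exp ((Fin.tail ξ i - ξ 0) * s))
      (-((ξ 0 - Fin.tail ξ i) * Real.exp ((Fin.tail ξ i - ξ 0) * s))) s := by
    convert (hasDerivAt_const_mul (x := s) (Fin.tail ξ i - ξ 0)).exp using 1
    ring
  rw [altSum_eq_exp_mul_altSum_sub_const ξ x (ξ 0), altSum_eq_det,
    det_eq_integral_interlacingBox hderiv (fun i => by fun_prop) hx (by simp) (by simp [Fin.tail]),
    ← MeasureTheory.integral_const_mul, ← MeasureTheory.integral_const_mul]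
  congr 1 with t
  have hcolumn := Matrix.det_mul_column (fun i => ξ 0 - Fin.tail ξ i)
    (Matrix.of fun i j => Real.exp ((Fin.tail ξ i - ξ 0) * t j))
  simp only [Matrix.of_apply] at hcolumn
  simp only [neg_neg]
  rw [hcolumn, ← altSum_eq_det (fun i => Fin.tail ξ i - ξ 0),
    altSum_eq_exp_mul_altSum_sub_const (Fin.tail ξ) t (ξ 0), mul_sub, Real.exp_sub]
  field_simp

theorem prod_factorial_mul_altSum_eq_integral {m : ℕ} (ξ : Fin (m + 1) → ℝ)
    {x : Fin (m + 1) → ℝ} (hx : Antitone x) :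
    (∏ k ∈ range (m + 1), (k.factorial : ℝ)) * altSum ξ x =
      m.factorial * (∏ i, (ξ 0 - Fin.tail ξ i)) * ∫ t in interlacingBox x,
        Real.exp (ξ 0 * (∑ k, x k - ∑ k, t k)) *
          ((∏ k ∈ range m, (k.factorial : ℝ)) * altSum (Fin.tail ξ) t) := by
  simp only [mul_left_comm (Real.exp _)]
  rw [MeasureTheory.integral_const_mul, prod_range_succ, altSum_eq_integral ξ hx]
  ring

end AlternatingSum

section Tail

theorem antitone_tail {α : Type*} [Preorder α] {m : ℕ} {x : Fin (m + 1) → α} (hx : Antitone x) :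
    Antitone (Fin.tail x) :=
  hx.comp_monotone Fin.strictMono_succ.monotone

theorem sum_mul_sub_eq_sum_tail {R : Type*} [CommRing R] {m : ℕ} (ξ x : Fin (m + 1) → R)
    (t : Fin m → R) :
    ∑ k, ξ k * x k - (ξ 0 * (∑ k, x k - ∑ k, t k) + ∑ k, Fin.tail ξ k * t k) =
      ∑ k, (ξ 0 - Fin.tail ξ k) * (t k - Fin.tail x k) := by
  simp only [Fin.sum_univ_succ, Fin.tail, sub_mul, mul_sub, mul_add, sum_sub_distrib, mul_sum]
  ring

variable {R : Type*} [CommRing R] [PartialOrder R] [IsOrderedRing R] {m : ℕ}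
  {ξ x : Fin (m + 1) → R} {t : Fin m → R}

theorem prod_zero_sub_tail_nonneg (hξ : Antitone ξ) : 0 ≤ ∏ i, (ξ 0 - Fin.tail ξ i) :=
  prod_nonneg fun _ _ => sub_nonneg.2 (hξ (Fin.zero_le _))

theorem add_sum_tail_le_sum (hξ : Antitone ξ) (ht : Fin.tail x ≤ t) :
    ξ 0 * (∑ k, x k - ∑ k, t k) + ∑ k, Fin.tail ξ k * t k ≤ ∑ k, ξ k * x k := by
  rw [← sub_nonneg, sum_mul_sub_eq_sum_tail]
  exact sum_nonneg fun k _ =>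
    mul_nonneg (sub_nonneg.2 (hξ (Fin.zero_le _))) (sub_nonneg.2 (ht k))

theorem sum_rev_le_add_sum_tail_rev (hξ : Antitone ξ) (ht : t ≤ Fin.init x) :
    ∑ k, ξ k * x k.rev ≤
      ξ 0 * (∑ k, x k - ∑ k, t k) + ∑ k, Fin.tail ξ k * t k.rev := by
  have hx_rev : ∑ k : Fin (m + 1), x k.rev = ∑ k, x k := Equiv.sum_comp Fin.revPerm x
  have ht_rev : ∑ k : Fin m, t k.rev = ∑ k, t k := Equiv.sum_comp Fin.revPerm t
  rw [← hx_rev, ← ht_rev, ← sub_nonpos, sum_mul_sub_eq_sum_tail ξ fun k => x k.rev]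
  refine sum_nonpos fun k _ =>
    mul_nonpos_of_nonneg_of_nonpos (sub_nonneg.2 (hξ (Fin.zero_le _))) (sub_nonpos.2 ?_)
  rw [Fin.tail, Fin.rev_succ]
  exact ht k.rev

end Tail

section Bounds

open MeasureTheory

theorem prod_factorial_mul_altSum_le {n : ℕ} {ξ x : Fin n → ℝ} (hξ : Antitone ξ)
    (hx : Antitone x) :
    (∏ k ∈ range n, (k.factorial : ℝ)) * altSum ξ x ≤
      Real.exp (∑ k, ξ k * x k) * vand ξ * vand x := by
  induction n with
  | zero => simp [altSum, vand]
  | succ m ih =>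
    rw [mul_vand_mul_vand_eq_integral _ ξ hx, prod_factorial_mul_altSum_eq_integral ξ hx]
    refine mul_le_mul_of_nonneg_left ?_
      (mul_nonneg (Nat.cast_nonneg _) (prod_zero_sub_tail_nonneg hξ))
    refine setIntegral_mono_on (Continuous.integrableOn_Icc (by fun_prop))
      (Continuous.integrableOn_Icc (by fun_prop)) measurableSet_Icc fun t ht => ?_
    have ht_anti := antitone_of_mem_interlacingBox hx ht
    have hξ_vand := vand_nonneg (antitone_tail hξ)
    have ht_vand := vand_nonneg ht_anti
    calc
      _ ≤ Real.exp (ξ 0 * (∑ k, x k - ∑ k, t k)) *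
          (Real.exp (∑ k, Fin.tail ξ k * t k) * vand (Fin.tail ξ) * vand t) :=
        mul_le_mul_of_nonneg_left (ih (antitone_tail hξ) ht_anti) (Real.exp_nonneg _)
      _ = Real.exp (ξ 0 * (∑ k, x k - ∑ k, t k) + ∑ k, Fin.tail ξ k * t k) *
          vand (Fin.tail ξ) * vand t := by
        rw [Real.exp_add]
        ring
      _ ≤ Real.exp (∑ k, ξ k * x k) * vand (Fin.tail ξ) * vand t := by
        gcongr
        exact add_sum_tail_le_sum hξ ht.1

theorem le_prod_factorial_mul_altSum {n : ℕ} {ξ x : Fin n → ℝ} (hξ : Antitone ξ)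
    (hx : Antitone x) :
    Real.exp (∑ k, ξ k * x k.rev) * vand ξ * vand x ≤
      (∏ k ∈ range n, (k.factorial : ℝ)) * altSum ξ x := by
  induction n with
  | zero => simp [altSum, vand]
  | succ m ih =>
    rw [mul_vand_mul_vand_eq_integral _ ξ hx, prod_factorial_mul_altSum_eq_integral ξ hx]
    refine mul_le_mul_of_nonneg_left ?_
      (mul_nonneg (Nat.cast_nonneg _) (prod_zero_sub_tail_nonneg hξ))
    refine setIntegral_mono_on (Continuous.integrableOn_Icc (by fun_prop))
      (Continuous.integrableOn_Icc (by fun_prop)) measurableSet_Icc fun t ht => ?_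
    have ht_anti := antitone_of_mem_interlacingBox hx ht
    have hξ_vand := vand_nonneg (antitone_tail hξ)
    have ht_vand := vand_nonneg ht_anti
    calc
      _ ≤ Real.exp (ξ 0 * (∑ k, x k - ∑ k, t k) + ∑ k, Fin.tail ξ k * t k.rev) *
          vand (Fin.tail ξ) * vand t := by
        gcongr
        exact sum_rev_le_add_sum_tail_rev hξ ht.2
      _ = Real.exp (ξ 0 * (∑ k, x k - ∑ k, t k)) *
          (Real.exp (∑ k, Fin.tail ξ k * t k.rev) * vand (Fin.tail ξ) * vand t) := by
        rw [Real.exp_add]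
        ring
      _ ≤ Real.exp (ξ 0 * (∑ k, x k - ∑ k, t k)) *
          ((∏ k ∈ range m, (k.factorial : ℝ)) * altSum (Fin.tail ξ) t) :=
        mul_le_mul_of_nonneg_left (ih (antitone_tail hξ) ht_anti) (Real.exp_nonneg _)

end Bounds

section RearrangementGap

variable {R : Type*} [CommRing R] [PartialOrder R] [IsOrderedRing R]

theorem sum_mul_sub_sum_mul_comp_perm_le {ι : Type*} [Fintype ι] {f g : ι → R} {a b c d : R}
    (hf : ∀ i, f i ∈ Set.Icc a b) (hg : ∀ i, g i ∈ Set.Icc c d) (σ : Equiv.Perm ι) :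
    ∑ i, f i * g i - ∑ i, f i * g (σ i) ≤ Fintype.card ι * ((b - a) * (d - c)) := by
  have hshift : ∑ i, f i * g i - ∑ i, f i * g (σ i) = ∑ i, (f i - a) * (g i - g (σ i)) := by
    simp only [sub_mul, mul_sub, sum_sub_distrib, ← mul_sum, Equiv.sum_comp]
    ring
  rw [hshift, ← nsmul_eq_mul]
  exact sum_le_card_nsmul _ _ _ fun i _ =>
    mul_le_mul_of_nonneg (sub_le_sub_right (hf i).2 a) (sub_le_sub (hg i).2 (hg (σ i)).1)
    (sub_nonneg.2 (hf i).1) (sub_nonneg.2 ((hg i).1.trans (hg i).2))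

theorem sum_castSucc_sub_succ {G : Type*} [AddCommGroup G] {m : ℕ} (x : Fin (m + 1) → G) :
    ∑ i : Fin m, (x i.castSucc - x i.succ) = x 0 - x (Fin.last m) := by
  have h := (Fin.sum_univ_succ x).symm.trans (Fin.sum_univ_castSucc x)
  rw [sum_sub_distrib, sub_eq_sub_iff_add_eq_add, h, add_comm]

theorem zero_sub_last_mul_zero_sub_last_le {l m : ℕ} {δ : R} {ξ : Fin (l + 1) → R}
    {x : Fin (m + 1) → R}
    (h : ∀ (i : Fin l) (j : Fin m),
      (ξ i.castSucc - ξ i.succ) * (x j.castSucc - x j.succ) ≤ δ) :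
    (ξ 0 - ξ (Fin.last l)) * (x 0 - x (Fin.last m)) ≤ l * (m * δ) := by
  rw [← sum_castSucc_sub_succ, ← sum_castSucc_sub_succ, sum_mul_sum]
  calc
    _ ≤ ∑ _i : Fin l, ∑ _j : Fin m, δ := sum_le_sum fun i _ => sum_le_sum fun j _ => h i j
    _ = l * (m * δ) := by simp

theorem sum_mul_sub_sum_mul_comp_perm_le_of_antitone {m : ℕ} {δ : R} {ξ x : Fin (m + 1) → R}
    (hξ : Antitone ξ) (hx : Antitone x)
    (h : ∀ i j : Fin m, (ξ i.castSucc - ξ i.succ) * (x j.castSucc - x j.succ) ≤ δ)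
    (σ : Equiv.Perm (Fin (m + 1))) :
    ∑ k, ξ k * x k - ∑ k, ξ k * x (σ k) ≤ (m + 1) * (m * (m * δ)) := by
  have hmem {y : Fin (m + 1) → R} (hy : Antitone y) (k : Fin (m + 1)) :
      y k ∈ Set.Icc (y (Fin.last m)) (y 0) := ⟨hy (Fin.le_last k), hy (Fin.zero_le k)⟩
  calc
    _ ≤ (Fintype.card (Fin (m + 1)) : R) *
        ((ξ 0 - ξ (Fin.last m)) * (x 0 - x (Fin.last m))) :=
      sum_mul_sub_sum_mul_comp_perm_le (hmem hξ) (hmem hx) σ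
    _ ≤ (Fintype.card (Fin (m + 1)) : R) * (m * (m * δ)) :=
      mul_le_mul_of_nonneg_left (zero_sub_last_mul_zero_sub_last_le h) (Nat.cast_nonneg _)
    _ = (m + 1) * (m * (m * δ)) := by rw [Fintype.card_fin, Nat.cast_succ]

end RearrangementGap

/-- If all products of simple-root values `(λ_i−λ_{i+1})(x_j−x_{j+1})` are `≤ δ`, then
`∑_σ sgn(σ) e^{∑ λ_{σ(k)} x_k} ≍ e^{⟨λ,x⟩} V(λ) V(x)`, with constants depending only
on `n` and `δ`. -/
theorem altSum_estimate_small (n : ℕ) (hn : 1 ≤ n) (δ : ℝ) (hδ : 0 < δ) :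
    ∃ C₁ C₂ : ℝ, 0 < C₁ ∧ 0 < C₂ ∧
      ∀ lam x : Fin n → ℝ, Antitone lam → Antitone x →
        (∀ i j : Fin n, ∀ hi : (i : ℕ) + 1 < n, ∀ hj : (j : ℕ) + 1 < n,
          (lam i - lam ⟨(i : ℕ) + 1, hi⟩) * (x j - x ⟨(j : ℕ) + 1, hj⟩) ≤ δ) →
        C₁ * (Real.exp (∑ k, lam k * x k) * vand lam * vand x) ≤ altSum lam x ∧
        altSum lam x ≤ C₂ * (Real.exp (∑ k, lam k * x k) * vand lam * vand x) := by
  obtain ⟨m, rfl⟩ := Nat.exists_eq_add_of_le' hn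
  have hP : 0 < ∏ k ∈ range (m + 1), (k.factorial : ℝ) := by positivity
  set P := ∏ k ∈ range (m + 1), (k.factorial : ℝ)
  refine ⟨P⁻¹ * Real.exp (-((m + 1) * (m * (m * δ)))), P⁻¹, by positivity, by positivity,
    fun lam x hlam hx hsmall => ⟨?_, ?_⟩⟩
  · have hgap := sum_mul_sub_sum_mul_comp_perm_le_of_antitone hlam hx
      (fun i j => hsmall i.castSucc j.castSucc (by simp) (by simp)) Fin.revPerm
    have hlam_vand := vand_nonneg hlam
    have hx_vand := vand_nonneg hx
    rw [mul_assoc, inv_mul_le_iff₀ hP]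
    calc
      _ = Real.exp (-((m + 1) * (m * (m * δ))) + ∑ k, lam k * x k) * vand lam * vand x := by
        rw [Real.exp_add]
        ring
      _ ≤ Real.exp (∑ k, lam k * x k.rev) * vand lam * vand x := by
        gcongr
        exact neg_add_le_iff_le_add.2 (sub_le_iff_le_add.1 hgap)
      _ ≤ P * altSum lam x := le_prod_factorial_mul_altSum hlam hx
  · exact (le_inv_mul_iff₀ hP).2 (prod_factorial_mul_altSum_le hlam hx)
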